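/- Let A₁, A'₁, A₂, A'₂ be objects of A with A₁ = A'₂, and let f_j : A_j → A'_j (j = 1, 2) be morphisms in K^b(A)/𝔻 presented as f_j = g_j ∘ s_j⁻¹ ∘ i_j, where C_j, C'_j are objects of A, g_j ∈ A(C'_j, A'_j), s_j ∈ A(C'_j, C_j) with Cone(s_j) ∈ D, and i_j ∈ A(A_j, C_j). Then f₁ ∘ f₂ = (0, g₁) ∘ M⁻¹ ∘ (i₂; 0), where M : C'₂ ⊕ C'₁ → C₂ ⊕ C₁ is the matrix morphism with rows (s₂, 0) and (−i₁ ∘ g₂, s₁), (0, g₁) : C'₂ ⊕ C'₁ → A'₁ and (i₂; 0) : A₂ → C₂ ⊕ C₁ are the indicated matrix morphisms, and M becomes invertible in K^b(A)/𝔻. -/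

import Mathlib

open CategoryTheory Limits Pretriangulated ZeroObject

universe v u v' u'

section TriangulatedPrelude

variable {C : Type u} [Category.{v} C] [HasZeroObject C] [HasShift C ℤ] [Preadditive C]
  [∀ n : ℤ, (shiftFunctor C n).Additive] [Pretriangulated C]

/-- The objects of the smallest strict full triangulated subcategory of `C`
containing the set of objects `B`. -/
inductive genSub (B : Set C) : C → Prop
  | of (X : C) (hX : X ∈ B) : genSub B X
  | zero (X : C) (hX : IsZero X) : genSub B X
  | shift (X : C) (n : ℤ) (hX : genSub B X) : genSub B (X⟦n⟧)
  | ext₂ (T : Triangle C) (hT : T ∈ distTriang C) (h₁ : genSub B T.obj₁)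
      (h₃ : genSub B T.obj₃) : genSub B T.obj₂

/-- The triangulated subcategory of `C` generated by `B`. -/
def genSubcat (B : Set C) : ObjectProperty C :=
  genSub B

instance (B : Set C) : (genSubcat B).IsTriangulated where
  exists_zero := ⟨0, isZero_zero _, genSub.zero _ (isZero_zero _)⟩
  isStableUnderShiftBy n := ⟨fun X h => genSub.shift X n h⟩
  ext₂' T hT h₁ h₃ :=
    ObjectProperty.le_isoClosure (genSubcat B) _ (genSub.ext₂ T hT h₁ h₃)

/-- The extension-closure of a class of objects `E`: the smallest class containing `E`
and `0` and such that for any distinguished triangle `X ⟶ Y ⟶ Z` with `X, Z` in the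
class, `Y` is also in the class. -/
inductive extClosure (E : Set C) : C → Prop
  | of (X : C) (hX : X ∈ E) : extClosure E X
  | zero (X : C) (hX : IsZero X) : extClosure E X
  | ext₂ (T : Triangle C) (hT : T ∈ distTriang C) (h₁ : extClosure E T.obj₁)
      (h₃ : extClosure E T.obj₃) : extClosure E T.obj₂

/-- `D_{[i,j]}`: the extension-closure of `∪_{i ≤ l ≤ j} D[l]`. -/
def shiftClosure (D : Set C) (i j : ℤ) : Set C :=
  extClosure {X | ∃ (Y : C) (l : ℤ), i ≤ l ∧ l ≤ j ∧ Y ∈ D ∧ X = Y⟦l⟧}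

/-- `D_{≥ i} = ∪_{k ≥ i} D_{[i,k]}`. -/
def shiftClosureGE (D : Set C) (i : ℤ) : Set C := {X | ∃ k, i ≤ k ∧ X ∈ shiftClosure D i k}

/-- `D_{≤ j} = ∪_{k ≤ j} D_{[k,j]}`. -/
def shiftClosureLE (D : Set C) (j : ℤ) : Set C := {X | ∃ k, k ≤ j ∧ X ∈ shiftClosure D k j}

/-- A set of objects `D` is weakly negative if `0 ∈ D` and `Hom(X, Y[i]) = 0`
for all `X, Y ∈ D` and all `i ≥ 2`. -/
def WeaklyNegative (D : Set C) : Prop :=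
  (0 : C) ∈ D ∧ ∀ X ∈ D, ∀ Y ∈ D, ∀ i : ℤ, 2 ≤ i → ∀ f : X ⟶ (Y⟦i⟧), f = 0

end TriangulatedPrelude

attribute [local instance] Limits.hasBinaryBiproducts_of_finite_biproducts

section KPrelude

variable {A : Type u} [Category.{v} A] [Preadditive A] [HasZeroObject A] [HasFiniteBiproducts A]

/-- The two-term cochain complex with `P` in degree `n` and `Q` in degree `n + 1`,
with differential given by `f : P ⟶ Q` (and all other terms `0`).
In particular, `twoComplex (-1) f` is the cone of a morphism `f` of `A`. -/
noncomputable def twoComplex (n : ℤ) {P Q : A} (f : P ⟶ Q) : CochainComplex A ℤ where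
  X i := if i = n then P else if i = n + 1 then Q else 0
  d i j :=
    if hij : i = n ∧ j = n + 1 then
      eqToHom (by simp [hij.1]) ≫ f ≫
        eqToHom (by simp [hij.2, show ¬ ((n : ℤ) + 1 = n) by omega])
    else 0
  shape i j hij := by
    rw [dif_neg]
    rintro ⟨rfl, rfl⟩
    exact hij rfl
  d_comp_d' i j k _ _ := by
    by_cases h1 : i = n ∧ j = n + 1
    · by_cases h2 : j = n ∧ k = n + 1
      · obtain ⟨h1a, h1b⟩ := h1; obtain ⟨h2a, h2b⟩ := h2; omega
      · rw [dif_neg h2, comp_zero]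
    · rw [dif_neg h1, zero_comp]

/-- The chain map from the two-term complex (in degrees `n`, `n + 1`) determined by
`f : P ⟶ Q` to the complex concentrated in degree `n` with value `M`, whose degree `n`
component is `g : P ⟶ M`. -/
noncomputable def twoComplexToSingle (n : ℤ) {P Q M : A} (f : P ⟶ Q) (g : P ⟶ M) :
    twoComplex n f ⟶ (HomologicalComplex.single A (ComplexShape.up ℤ) n).obj M where
  f i :=
    if h : i = n then
      eqToHom (by simp [twoComplex, h]) ≫ g ≫
        (HomologicalComplex.singleObjXSelf (ComplexShape.up ℤ) n M).inv ≫ eqToHom (by rw [h])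
    else 0
  comm' i j hij := by
    simp only [ComplexShape.up_Rel] at hij
    by_cases hj : j = n
    · have hi : ¬ (i = n ∧ j = n + 1) := by rintro ⟨rfl, rfl⟩; omega
      have hd : (twoComplex n f).d i j = 0 := by
        dsimp [twoComplex]; rw [dif_neg hi]; rfl
      rw [hd, zero_comp]
      have : i ≠ n := by omega
      rw [dif_neg this, zero_comp]
    · rw [dif_neg hj]
      rw [comp_zero]
      have : ((HomologicalComplex.single A (ComplexShape.up ℤ) n).obj M).d i j = 0 := by simp
      rw [this, comp_zero]

/-- The quotient functor `C^b(A) ⥤ K(A)` (restricted from all complexes). -/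
noncomputable abbrev homotopyQ : CochainComplex A ℤ ⥤ HomotopyCategory A (ComplexShape.up ℤ) :=
  HomotopyCategory.quotient A (ComplexShape.up ℤ)

/-- The canonical embedding of `A` into the homotopy category, as complexes concentrated
in degree `0`. -/
noncomputable abbrev iotaA : A ⥤ HomotopyCategory A (ComplexShape.up ℤ) :=
  HomologicalComplex.single A (ComplexShape.up ℤ) 0 ⋙ homotopyQ

/-- `B`: the set of cones of elements of `S`, viewed in the homotopy category. -/
def coneSet (S : MorphismProperty A) : Set (HomotopyCategory A (ComplexShape.up ℤ)) :=
  {X | ∃ (P Q : A) (s : P ⟶ Q), S s ∧ X = homotopyQ.obj (twoComplex (-1) s)}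

/-- The Verdier localization functor of the homotopy category by the triangulated
subcategory `𝔻` generated by the cones of elements of `S`. -/
noncomputable abbrev locQ (S : MorphismProperty A) :
    HomotopyCategory A (ComplexShape.up ℤ) ⥤ (genSubcat (coneSet S)).trW.Localization :=
  (genSubcat (coneSet S)).trW.Q

/-- The composite functor `A ⥤ K(A) ⥤ K(A)/𝔻`. -/
noncomputable abbrev uBig (S : MorphismProperty A) :
    A ⥤ (genSubcat (coneSet S)).trW.Localization :=
  iotaA ⋙ locQ S

/-- `A[S⁻¹]_add`: the full subcategory of the Verdier quotient whose
objects are those of `A` (viewed as complexes concentrated in degree `0`). -/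
def AddLoc (S : MorphismProperty A) : Type u := A

noncomputable instance (S : MorphismProperty A) : Category (AddLoc S) where
  Hom X Y := (uBig S).obj X ⟶ (uBig S).obj Y
  id X := 𝟙 ((uBig S).obj X)
  comp f g := f ≫ g

/-- The canonical functor `u : A ⥤ A[S⁻¹]_add` induced by the localization functor. -/
noncomputable def uFun (S : MorphismProperty A) : A ⥤ AddLoc S where
  obj X := X
  map f := (uBig S).map f
  map_id X := (uBig S).map_id X
  map_comp f g := (uBig S).map_comp f g

noncomputable instance (S : MorphismProperty A) : Preadditive (AddLoc S) where
  homGroup X Y := inferInstanceAs (AddCommGroup ((uBig S).obj X ⟶ (uBig S).obj Y))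
  add_comp P Q R f f' g :=
    @Preadditive.add_comp _ _ _ ((uBig S).obj P) ((uBig S).obj Q) ((uBig S).obj R) f f' g
  comp_add P Q R f g g' :=
    @Preadditive.comp_add _ _ _ ((uBig S).obj P) ((uBig S).obj Q) ((uBig S).obj R) f g g'

end KPrelude

/-!
The matrix `M` is triangular with diagonal entries `s₂` and `s₁`, hence invertible as soon as these
are. Solving `e ∘ M = (0, g₁)` by back substitution gives
`e = (g₁ ∘ s₁⁻¹ ∘ i₁ ∘ g₂ ∘ s₂⁻¹, g₁ ∘ s₁⁻¹)`, and `e ∘ (i₂; 0) = f₁ ∘ f₂`. Since the functor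
`A ⥤ K^b(A)/𝔻` is additive, it turns the matrix `M` over `A` into the matrix of the images of its
entries, so the computation takes place among biproducts in the quotient.
-/

section Triangular

variable {E : Type u'} [Category.{v'} E]

section HasZeroMorphisms

variable [HasZeroMorphisms E] {X₁ X₂ Y₁ Y₂ : E} [HasBinaryBiproduct X₁ X₂]
  [HasBinaryBiproduct Y₁ Y₂]

/-- The morphism `X₁ ⊞ X₂ ⟶ Y₁ ⊞ Y₂` whose matrix is lower triangular, with rows `(a, 0)` and
`(b, d)`: as for matrices acting on column vectors, columns are indexed by the source. -/
noncomputable def biprodTriangular (a : X₁ ⟶ Y₁) (b : X₁ ⟶ Y₂) (d : X₂ ⟶ Y₂) :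
    X₁ ⊞ X₂ ⟶ Y₁ ⊞ Y₂ :=
  biprod.desc (biprod.lift a b) (biprod.lift 0 d)

theorem biprodTriangular_id_zero_id :
    biprodTriangular (𝟙 X₁) 0 (𝟙 X₂) = 𝟙 (X₁ ⊞ X₂) := by
  ext <;> simp [biprodTriangular]

theorem map_biprodTriangular {D : Type u} [Category.{v} D] [HasZeroMorphisms D] (F : E ⥤ D)
    [F.PreservesZeroMorphisms] [PreservesBinaryBiproduct X₁ X₂ F] [PreservesBinaryBiproduct Y₁ Y₂ F]
    (a : X₁ ⟶ Y₁) (b : X₁ ⟶ Y₂) (d : X₂ ⟶ Y₂) :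
    F.map (biprodTriangular a b d) =
      (F.mapBiprod X₁ X₂).hom ≫ biprodTriangular (F.map a) (F.map b) (F.map d) ≫
        (F.mapBiprod Y₁ Y₂).inv := by
  simp only [biprodTriangular, ← biprod.mapBiprod_hom_desc, ← biprod.lift_mapBiprod, F.map_zero]
  congr 1
  ext <;> simp only [biprod.inl_desc, biprod.inr_desc, biprod.inl_desc_assoc,
    biprod.inr_desc_assoc]

end HasZeroMorphisms

section Preadditive

variable [Preadditive E] {X₁ X₂ Y₁ Y₂ : E} [HasBinaryBiproduct X₁ X₂] [HasBinaryBiproduct Y₁ Y₂]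
  (a : X₁ ⟶ Y₁) (b : X₁ ⟶ Y₂) (d : X₂ ⟶ Y₂)

theorem biprodTriangular_comp_desc {Z : E} (p : Y₁ ⟶ Z) (q : Y₂ ⟶ Z) :
    biprodTriangular a b d ≫ biprod.desc p q = biprod.desc (a ≫ p + b ≫ q) (d ≫ q) := by
  ext <;> simp [biprodTriangular]

theorem biprodTriangular_comp_biprodTriangular {Z₁ Z₂ : E} [HasBinaryBiproduct Z₁ Z₂]
    (a' : Y₁ ⟶ Z₁) (b' : Y₁ ⟶ Z₂) (d' : Y₂ ⟶ Z₂) :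
    biprodTriangular a b d ≫ biprodTriangular a' b' d' =
      biprodTriangular (a ≫ a') (a ≫ b' + b ≫ d') (d ≫ d') := by
  ext <;> simp [biprodTriangular]

instance isIso_biprodTriangular [IsIso a] [IsIso d] : IsIso (biprodTriangular a b d) :=
  ⟨biprodTriangular (inv a) (-(inv a ≫ b ≫ inv d)) (inv d), by
    simp [biprodTriangular_comp_biprodTriangular, biprodTriangular_id_zero_id]⟩

theorem fraction_comp_fraction_eq_matrix_fraction {A₂ A₁ A'₁ C₁ C'₁ C₂ C'₂ : E}
    [HasBinaryBiproduct C'₂ C'₁] [HasBinaryBiproduct C₂ C₁]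
    (i₂ : A₂ ⟶ C₂) (s₂ : C'₂ ⟶ C₂) (g₂ : C'₂ ⟶ A₁)
    (i₁ : A₁ ⟶ C₁) (s₁ : C'₁ ⟶ C₁) (g₁ : C'₁ ⟶ A'₁) [IsIso s₁] [IsIso s₂] :
    (i₂ ≫ inv s₂ ≫ g₂) ≫ i₁ ≫ inv s₁ ≫ g₁ =
      biprod.lift i₂ 0 ≫ inv (biprodTriangular s₂ (-(g₂ ≫ i₁)) s₁) ≫ biprod.desc 0 g₁ := by
  have back_substitution : inv (biprodTriangular s₂ (-(g₂ ≫ i₁)) s₁) ≫ biprod.desc 0 g₁ =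
      biprod.desc (inv s₂ ≫ g₂ ≫ i₁ ≫ inv s₁ ≫ g₁) (inv s₁ ≫ g₁) := by
    simp [IsIso.inv_comp_eq, biprodTriangular_comp_desc]
  simp [back_substitution]

end Preadditive

end Triangular

theorem statement13_general {A : Type u} [Category.{v} A] [Preadditive A]
    {E : Type u'} [Category.{v'} E] [Preadditive E] (F : A ⥤ E) [F.Additive]
    {A₂ A₁ A'₁ C₁ C'₁ C₂ C'₂ : A} [HasBinaryBiproduct C'₂ C'₁] [HasBinaryBiproduct C₂ C₁]
    (g₁ : C'₁ ⟶ A'₁) (s₁ : C'₁ ⟶ C₁) (i₁ : A₁ ⟶ C₁)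
    (g₂ : C'₂ ⟶ A₁) (s₂ : C'₂ ⟶ C₂) (i₂ : A₂ ⟶ C₂)
    [IsIso (F.map s₁)] [IsIso (F.map s₂)]
    (f₁ : F.obj A₁ ⟶ F.obj A'₁) (f₂ : F.obj A₂ ⟶ F.obj A₁)
    (hf₁ : f₁ = F.map i₁ ≫ inv (F.map s₁) ≫ F.map g₁)
    (hf₂ : f₂ = F.map i₂ ≫ inv (F.map s₂) ≫ F.map g₂) :
    ∃ _ : IsIso (F.map (biprodTriangular s₂ (-(g₂ ≫ i₁)) s₁)),
      f₂ ≫ f₁ = F.map (biprod.lift i₂ 0) ≫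
        inv (F.map (biprodTriangular s₂ (-(g₂ ≫ i₁)) s₁)) ≫ F.map (biprod.desc 0 g₁) := by
  have : PreservesBinaryBiproducts F := preservesBinaryBiproducts_of_preservesBiproducts F
  have isIso_map : IsIso (F.map (biprodTriangular s₂ (-(g₂ ≫ i₁)) s₁)) := by
    rw [map_biprodTriangular]
    infer_instance
  refine ⟨isIso_map, ?_⟩
  rw [hf₁, hf₂, fraction_comp_fraction_eq_matrix_fraction, ← biprod.lift_mapBiprod,
    ← biprod.mapBiprod_hom_desc]
  -- The comparison isomorphisms `F.obj (X ⊞ Y) ≅ F.obj X ⊞ F.obj Y` cancel between the factors.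
  simp only [map_biprodTriangular, F.map_neg, F.map_comp, F.map_zero, IsIso.inv_comp,
    IsIso.Iso.inv_hom, IsIso.Iso.inv_inv, Category.assoc, Iso.inv_hom_id_assoc]

/-- Proposition: composition of morphisms of `K^b(A)/𝔻` presented in the form
`g ∘ s⁻¹ ∘ i` (with `Cone(s) ∈ D`): the composite `f₁ ∘ f₂` equals
`(0, g₁) ∘ M⁻¹ ∘ (i₂; 0)` for the indicated matrix morphism `M`, which becomes
invertible in the quotient. -/
theorem statement13 {A : Type u} [Category.{v} A] [Preadditive A] [HasZeroObject A]
    [HasFiniteBiproducts A] (S : MorphismProperty A)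
    (A₂ A₁ A'₁ C₁ C'₁ C₂ C'₂ : A)
    (g₁ : C'₁ ⟶ A'₁) (s₁ : C'₁ ⟶ C₁) (i₁ : A₁ ⟶ C₁)
    (g₂ : C'₂ ⟶ A₁) (s₂ : C'₂ ⟶ C₂) (i₂ : A₂ ⟶ C₂)
    (hD₁ : extClosure (coneSet S) (homotopyQ.obj (twoComplex (-1) s₁)))
    (hD₂ : extClosure (coneSet S) (homotopyQ.obj (twoComplex (-1) s₂)))
    [IsIso ((uBig S).map s₁)] [IsIso ((uBig S).map s₂)]
    (f₁ : (uBig S).obj A₁ ⟶ (uBig S).obj A'₁)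
    (f₂ : (uBig S).obj A₂ ⟶ (uBig S).obj A₁)
    (hf₁ : f₁ = (uBig S).map i₁ ≫ inv ((uBig S).map s₁) ≫ (uBig S).map g₁)
    (hf₂ : f₂ = (uBig S).map i₂ ≫ inv ((uBig S).map s₂) ≫ (uBig S).map g₂) :
    IsIso ((uBig S).map
      (biprod.desc (biprod.lift s₂ (-(g₂ ≫ i₁))) (biprod.lift 0 s₁))) ∧
    ∃ e : (uBig S).obj (C₂ ⊞ C₁) ⟶ (uBig S).obj A'₁,
      (uBig S).map (biprod.desc (biprod.lift s₂ (-(g₂ ≫ i₁))) (biprod.lift 0 s₁)) ≫ e =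
        (uBig S).map (biprod.desc 0 g₁) ∧
      f₂ ≫ f₁ = (uBig S).map (biprod.lift i₂ (0 : A₂ ⟶ C₁)) ≫ e := by
  have ⟨hM, comp_eq⟩ := statement13_general (uBig S) g₁ s₁ i₁ g₂ s₂ i₂ f₁ f₂ hf₁ hf₂
  rw [← biprodTriangular]
  exact ⟨hM, _, IsIso.hom_inv_id_assoc _ _, comp_eq⟩
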